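/- arXiv:1504.00538 — 2 statements merged into one kernel-verified Lean document; each statement's English description precedes it below -/
import Mathlib

section
/- Let X ∈ O_{m×r} and Y ∈ ℝ^{m×p} with 1 ≤ r ≤ m. Let Z be any minimizer of ‖Z − X‖_F² over Z ∈ H_{Y,r}. Then ((σ_r(Y)² − σ_{r+1}(Y)²)/2)·‖Z − X‖_F² ≤ ‖ZᵀY‖_F² − ‖XᵀY‖_F². -/
open Matrix BigOperators Filter

/-- The squared Frobenius norm of a real matrix. -/
def froSq {ι κ : Type*} [Fintype ι] [Fintype κ] (M : Matrix ι κ ℝ) : ℝ :=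
  ∑ i, ∑ j, (M i j) ^ 2

/-- The Frobenius norm of a real matrix. -/
noncomputable def fro {ι κ : Type*} [Fintype ι] [Fintype κ] (M : Matrix ι κ ℝ) : ℝ :=
  Real.sqrt (froSq M)

/-- The eigenvalues of `Y * Yᴴ`, sorted in descending order. -/
noncomputable def eigList {m : ℕ} {κ : Type*} [Fintype κ] (Y : Matrix (Fin m) κ ℝ) : List ℝ :=
  ((((Finset.univ : Finset (Fin m)).val.map
      (fun j => (Matrix.isHermitian_mul_conjTranspose_self Y).eigenvalues j)).sort (· ≤ ·)).reverse)

/-- The `i`-th largest singular value (1-indexed) of a real matrix, with the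
convention that it is `0` beyond the smaller matrix dimension. -/
noncomputable def sval {m : ℕ} {κ : Type*} [Fintype κ] (Y : Matrix (Fin m) κ ℝ) (i : ℕ) : ℝ :=
  Real.sqrt ((eigList Y).getD (i - 1) 0)

/-- The set of `m × r` real matrices with orthonormal columns. -/
def Stiefel (m r : ℕ) : Set (Matrix (Fin m) (Fin r) ℝ) :=
  {Z | Zᵀ * Z = 1}

/-- `H_{Y,r}`: the set of maximizers of `‖Zᵀ Y‖_F²` over the Stiefel manifold. -/
def HSet {m p : ℕ} (Y : Matrix (Fin m) (Fin p) ℝ) (r : ℕ) : Set (Matrix (Fin m) (Fin r) ℝ) :=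
  {Z | Z ∈ Stiefel m r ∧ ∀ W ∈ Stiefel m r, froSq (Wᵀ * Y) ≤ froSq (Zᵀ * Y)}

/-- The nuclear norm: the sum of all singular values. -/
noncomputable def nuclearNorm {a b : ℕ} (M : Matrix (Fin a) (Fin b) ℝ) : ℝ :=
  ∑ i ∈ Finset.range (min a b), sval M (i + 1)

/-- `U` maximizes `‖Uᵀ X‖_*` over `H_{Y,r}`. -/
def NucMax {m p r : ℕ} (Y : Matrix (Fin m) (Fin p) ℝ) (X U : Matrix (Fin m) (Fin r) ℝ) : Prop :=
  U ∈ HSet Y r ∧ ∀ V ∈ HSet Y r, nuclearNorm (Vᵀ * X) ≤ nuclearNorm (Uᵀ * X)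

/-- The uniqueness conditions for `(Y, r)` at `X`. -/
def UniqCond {m p : ℕ} (Y : Matrix (Fin m) (Fin p) ℝ) (r : ℕ)
    (X : Matrix (Fin m) (Fin r) ℝ) : Prop :=
  (∀ U, NucMax Y X U → (Uᵀ * X).det ≠ 0) ∧
  (∀ U₁ U₂, NucMax Y X U₁ → NucMax Y X U₂ → U₁ * U₁ᵀ = U₂ * U₂ᵀ)

/-- `Z` is a minimizer of `‖Z − X‖_F²` over `H_{Y,r}`. -/
def IsProj {m p r : ℕ} (Y : Matrix (Fin m) (Fin p) ℝ) (X Z : Matrix (Fin m) (Fin r) ℝ) : Prop :=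
  Z ∈ HSet Y r ∧ ∀ W ∈ HSet Y r, froSq (Z - X) ≤ froSq (W - X)

/-- The trace inner product of two matrices. -/
noncomputable def tinner {a b : ℕ} (A B : Matrix (Fin a) (Fin b) ℝ) : ℝ :=
  Matrix.trace (Aᵀ * B)

/-!
Write `YYᵀ = P diag(μ) Pᵀ` with `μ` decreasing, and let `U` consist of the first `r` columns of `P`.
For `X` with orthonormal columns, the row weights `cᵢ = ∑ₖ (PᵀX)ᵢₖ²` lie in `[0, 1]` and add up to
`r`, while `‖XᵀY‖² = ∑ μᵢcᵢ`. Moving all the weight to the first `r` indices therefore gains at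
least `(μᵣ - μᵣ₊₁)(r - ‖UᵀX‖²)`, so that `U` lies in `H_{Y,r}`, and so does `UQ` for every
orthogonal `Q`.
If `UᵀX = W diag(d) Vᵀ` is a singular value decomposition, then `dᵢ ∈ [0, 1]` and `Q = WVᵀ` gives
`⟨UQ, X⟩ = ∑ dᵢ ≥ ∑ dᵢ² = ‖UᵀX‖²`, that is, `‖UQ - X‖² ≤ 2(r - ‖UᵀX‖²)`. A minimizer `Z` is at
least as close to `X` as `UQ`.
-/

section OrthonormalColumns

variable {ι κ l : Type*} [Fintype ι]

theorem transpose_mul_apply_le_one [DecidableEq κ] [DecidableEq l] {U : Matrix ι κ ℝ}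
    {X : Matrix ι l ℝ} (hU : Uᵀ * U = 1) (hX : Xᵀ * X = 1) (i : κ) (j : l) : (Uᵀ * X) i j ≤ 1 := by
  have hUi : ∑ k, U k i * U k i = 1 := by simpa [mul_apply] using congr_fun₂ hU i i
  have hXj : ∑ k, X k j * X k j = 1 := by simpa [mul_apply] using congr_fun₂ hX j j
  calc (Uᵀ * X) i j = ∑ k, U k i * X k j := rfl
    _ ≤ ∑ k, (U k i * U k i + X k j * X k j) / 2 :=
        Finset.sum_le_sum fun k _ => by linarith [two_mul_le_add_sq (U k i) (X k j)]
    _ = 1 := by rw [← Finset.sum_div, Finset.sum_add_distrib, hUi, hXj]; norm_num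

variable [Fintype κ]

theorem transpose_mul_self_mul_eq_one [DecidableEq κ] [DecidableEq l]
    {U : Matrix ι κ ℝ} {V : Matrix κ l ℝ} (hU : Uᵀ * U = 1) (hV : Vᵀ * V = 1) :
    (U * V)ᵀ * (U * V) = 1 := by
  rw [transpose_mul, Matrix.mul_assoc, ← Matrix.mul_assoc Uᵀ, hU, Matrix.one_mul, hV]

theorem froSq_eq_trace (M : Matrix ι κ ℝ) : froSq M = (Mᵀ * M).trace := by
  simp only [froSq, trace, diag_apply, mul_apply, transpose_apply, ← sq]
  exact Finset.sum_comm

theorem froSq_nonneg (M : Matrix ι κ ℝ) : 0 ≤ froSq M :=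
  Finset.sum_nonneg fun _ _ => Finset.sum_nonneg fun _ _ => sq_nonneg _

theorem froSq_transpose (M : Matrix ι κ ℝ) : froSq Mᵀ = froSq M :=
  Finset.sum_comm

theorem froSq_diagonal [DecidableEq κ] (d : κ → ℝ) : froSq (diagonal d) = ∑ i, d i ^ 2 := by
  simp [froSq_eq_trace, trace_diagonal, sq]

variable [Fintype l] [DecidableEq κ]

theorem froSq_of_transpose_mul_self_eq_one {U : Matrix ι κ ℝ} (hU : Uᵀ * U = 1) :
    froSq U = Fintype.card κ := by
  rw [froSq_eq_trace, hU, trace_one]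

theorem froSq_mul_of_transpose_mul_self_eq_one {U : Matrix ι κ ℝ} (hU : Uᵀ * U = 1)
    (M : Matrix κ l ℝ) : froSq (U * M) = froSq M := by
  rw [froSq_eq_trace, froSq_eq_trace, transpose_mul, Matrix.mul_assoc, ← Matrix.mul_assoc Uᵀ, hU,
    Matrix.one_mul]

theorem froSq_transpose_mul_le {U : Matrix ι κ ℝ} (hU : Uᵀ * U = 1) (M : Matrix ι l ℝ) :
    froSq (Uᵀ * M) ≤ froSq M := by
  have pythagoras : froSq (M - U * (Uᵀ * M)) = froSq M - froSq (Uᵀ * M) := by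
    have cross : Mᵀ * (U * (Uᵀ * M)) = (Uᵀ * M)ᵀ * (Uᵀ * M) := by
      rw [transpose_mul, transpose_transpose, Matrix.mul_assoc]
    have cross' : (U * (Uᵀ * M))ᵀ * M = (Uᵀ * M)ᵀ * (Uᵀ * M) := by
      rw [transpose_mul, Matrix.mul_assoc]
    rw [froSq_eq_trace (M - _), transpose_sub, Matrix.sub_mul, Matrix.mul_sub, Matrix.mul_sub,
      trace_sub, trace_sub, trace_sub, cross, cross', ← froSq_eq_trace, ← froSq_eq_trace,
      ← froSq_eq_trace, froSq_mul_of_transpose_mul_self_eq_one hU]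
    ring
  linarith [froSq_nonneg (M - U * (Uᵀ * M))]

theorem sum_row_sq_le_one {U : Matrix ι κ ℝ} (hU : Uᵀ * U = 1) (i : ι) :
    ∑ k, U i k ^ 2 ≤ 1 := by
  classical
  have h := froSq_transpose_mul_le hU (replicateCol Unit (Pi.single i 1))
  simpa [froSq, mul_apply, Pi.single_apply] using h

theorem froSq_sub_eq {U X : Matrix ι κ ℝ} (hU : Uᵀ * U = 1) (hX : Xᵀ * X = 1) :
    froSq (U - X) = 2 * (Fintype.card κ - (Uᵀ * X).trace) := by
  have hswap : (Xᵀ * U).trace = (Uᵀ * X).trace := by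
    rw [← trace_transpose, transpose_mul, transpose_transpose]
  rw [froSq_eq_trace, transpose_sub, Matrix.sub_mul, Matrix.mul_sub, Matrix.mul_sub, hU, hX,
    trace_sub, trace_sub, trace_sub, hswap, trace_one]
  ring

end OrthonormalColumns

section SingularValueDecomposition

variable {ι κ : Type*} [Fintype ι] [Fintype κ] [DecidableEq κ]

theorem transpose_mul_self_eq_one_of_mem_unitaryGroup {P : Matrix κ κ ℝ}
    (hP : P ∈ unitaryGroup κ ℝ) : Pᵀ * P = 1 := by
  rwa [mem_unitaryGroup_iff', star_eq_conjTranspose, conjTranspose_eq_transpose_of_trivial] at hP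

theorem exists_orthogonal_diagonalization {A : Matrix κ κ ℝ} (hA : A.IsHermitian) :
    ∃ P : Matrix κ κ ℝ, Pᵀ * P = 1 ∧ Pᵀ * A * P = diagonal hA.eigenvalues := by
  refine ⟨hA.eigenvectorUnitary, transpose_mul_self_eq_one_of_mem_unitaryGroup (Subtype.prop _), ?_⟩
  simpa [Unitary.conjStarAlgAut_apply, star_eq_conjTranspose, Function.comp_def] using
    hA.conjStarAlgAut_star_eigenvectorUnitary

theorem exists_orthogonal_extension {s : Set κ} {v : κ → EuclideanSpace ℝ κ}
    (hv : Orthonormal ℝ (s.domRestrict v)) :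
    ∃ W : Matrix κ κ ℝ, Wᵀ * W = 1 ∧ ∀ i ∈ s, ∀ k, W k i = v i k := by
  obtain ⟨b, hb⟩ := hv.exists_orthonormalBasis_extension_of_card_eq (by simp)
  refine ⟨(EuclideanSpace.basisFun κ ℝ).toBasis.toMatrix b,
    transpose_mul_self_eq_one_of_mem_unitaryGroup
      ((EuclideanSpace.basisFun κ ℝ).toMatrix_orthonormalBasis_mem_unitary b), fun i hi k => ?_⟩
  simp [Module.Basis.toMatrix_apply, hb i hi]

theorem exists_orthogonal_mul_diagonal_eq {C : Matrix κ κ ℝ} {d : κ → ℝ}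
    (hC : Cᵀ * C = diagonal fun i => d i ^ 2) :
    ∃ W : Matrix κ κ ℝ, Wᵀ * W = 1 ∧ C = W * diagonal d := by
  have hcols (i j : κ) : ∑ k, C k i * C k j = if i = j then d i ^ 2 else 0 := by
    simpa [mul_apply, diagonal_apply] using congr_fun₂ hC i j
  let v (i : κ) : EuclideanSpace ℝ κ := WithLp.toLp 2 fun k => (d i)⁻¹ * C k i
  have hv : Orthonormal ℝ ({i | d i ≠ 0}.domRestrict v) := by
    rw [orthonormal_iff_ite]
    rintro ⟨i, hi : d i ≠ 0⟩ ⟨j, hj⟩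
    have hinner : inner ℝ (v i) (v j) = (d i)⁻¹ * (d j)⁻¹ * if i = j then d i ^ 2 else 0 := by
      rw [← hcols, Finset.mul_sum, PiLp.inner_apply]
      exact Finset.sum_congr rfl fun k _ => by simp only [v, RCLike.inner_apply, conj_trivial]; ring
    refine hinner.trans ?_
    by_cases hij : i = j
    · subst hij
      simp only [if_true]
      field_simp
    · simp [hij]
  obtain ⟨W, hW, hWv⟩ := exists_orthogonal_extension hv
  refine ⟨W, hW, ?_⟩
  ext k i
  rw [mul_diagonal]
  by_cases hi : d i = 0
  · have hcol : ∑ k, C k i * C k i = 0 := by simp [hcols, hi]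
    rw [Finset.sum_eq_zero_iff_of_nonneg fun k _ => mul_self_nonneg _] at hcol
    simpa [hi] using hcol k (Finset.mem_univ k)
  · rw [hWv i hi k]
    simp only [v]
    field_simp

theorem exists_singularValueDecomposition (N : Matrix κ κ ℝ) :
    ∃ (W V : Matrix κ κ ℝ) (d : κ → ℝ),
      Wᵀ * W = 1 ∧ Vᵀ * V = 1 ∧ (∀ i, 0 ≤ d i) ∧ N = W * diagonal d * Vᵀ := by
  have hpsd : (Nᵀ * N).PosSemidef := by
    simpa only [conjTranspose_eq_transpose_of_trivial] using posSemidef_conjTranspose_mul_self N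
  obtain ⟨V, hV, hdiag⟩ := exists_orthogonal_diagonalization hpsd.isHermitian
  obtain ⟨W, hW, hNV⟩ := exists_orthogonal_mul_diagonal_eq (C := N * V)
    (d := fun i => √(hpsd.isHermitian.eigenvalues i)) (by
      simp only [Real.sq_sqrt (hpsd.eigenvalues_nonneg _), ← hdiag, transpose_mul,
        Matrix.mul_assoc])
  refine ⟨W, V, fun i => √(hpsd.isHermitian.eigenvalues i), hW, hV, fun i => Real.sqrt_nonneg _, ?_⟩
  rw [← hNV, Matrix.mul_assoc, mul_eq_one_comm.1 hV, Matrix.mul_one]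

theorem exists_orthogonal_froSq_le_trace {U X : Matrix ι κ ℝ} (hU : Uᵀ * U = 1)
    (hX : Xᵀ * X = 1) :
    ∃ Q : Matrix κ κ ℝ, Qᵀ * Q = 1 ∧ froSq (Uᵀ * X) ≤ ((U * Q)ᵀ * X).trace := by
  obtain ⟨W, V, d, hW, hV, hd, hsvd⟩ := exists_singularValueDecomposition (Uᵀ * X)
  have hV' : Vᵀᵀ * Vᵀ = 1 := mul_eq_one_comm.1 hV
  have hd1 (i : κ) : d i ≤ 1 := by
    have hdiag : (U * W)ᵀ * (X * V) = diagonal d := by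
      rw [transpose_mul, Matrix.mul_assoc, ← Matrix.mul_assoc Uᵀ, hsvd, Matrix.mul_assoc,
        hV, Matrix.mul_one, ← Matrix.mul_assoc, hW, Matrix.one_mul]
    have hentry := transpose_mul_apply_le_one (transpose_mul_self_mul_eq_one hU hW)
      (transpose_mul_self_mul_eq_one hX hV) i i
    rwa [hdiag, diagonal_apply_eq] at hentry
  refine ⟨W * Vᵀ, transpose_mul_self_mul_eq_one hW hV', ?_⟩
  calc froSq (Uᵀ * X) = froSq (diagonal d) := by
        rw [hsvd, ← froSq_transpose, transpose_mul, transpose_transpose,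
          froSq_mul_of_transpose_mul_self_eq_one hV, froSq_transpose,
          froSq_mul_of_transpose_mul_self_eq_one hW]
    _ = ∑ i, d i ^ 2 := froSq_diagonal d
    _ ≤ ∑ i, d i := Finset.sum_le_sum fun i _ => pow_le_of_le_one (hd i) (hd1 i) two_ne_zero
    _ = ((U * (W * Vᵀ))ᵀ * X).trace := by
        rw [transpose_mul, Matrix.mul_assoc, hsvd, transpose_mul, transpose_transpose,
          Matrix.mul_assoc W, Matrix.mul_assoc V, ← Matrix.mul_assoc Wᵀ, hW, Matrix.one_mul,
          trace_mul_comm, Matrix.mul_assoc, hV, Matrix.mul_one, trace_diagonal]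

theorem exists_orthogonal_froSq_sub_le {U X : Matrix ι κ ℝ} (hU : Uᵀ * U = 1)
    (hX : Xᵀ * X = 1) :
    ∃ Q : Matrix κ κ ℝ, Qᵀ * Q = 1 ∧
      froSq (U * Q - X) ≤ 2 * (Fintype.card κ - froSq (Uᵀ * X)) := by
  obtain ⟨Q, hQ, hle⟩ := exists_orthogonal_froSq_le_trace hU hX
  refine ⟨Q, hQ, ?_⟩
  rw [froSq_sub_eq (transpose_mul_self_mul_eq_one hU hQ) hX]
  linarith

end SingularValueDecomposition

section SpectralGap

variable {ι κ l : Type*} [Fintype ι] [Fintype κ] [Fintype l]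

theorem gap_mul_le_sum_sub_sum_mul {s : Finset ι} {μ c : ι → ℝ} {a b : ℝ}
    (ha : ∀ i ∈ s, a ≤ μ i) (hb : ∀ i ∉ s, μ i ≤ b) (hc₀ : ∀ i, 0 ≤ c i) (hc₁ : ∀ i, c i ≤ 1)
    (hc : ∑ i, c i = s.card) :
    (a - b) * (s.card - ∑ i ∈ s, c i) ≤ ∑ i ∈ s, μ i - ∑ i, μ i * c i := by
  classical
  have hin : a * ∑ i ∈ s, (1 - c i) ≤ ∑ i ∈ s, μ i * (1 - c i) := by
    rw [Finset.mul_sum]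
    exact Finset.sum_le_sum fun i hi =>
      mul_le_mul_of_nonneg_right (ha i hi) (sub_nonneg.2 (hc₁ i))
  have hout : ∑ i ∈ sᶜ, μ i * c i ≤ b * ∑ i ∈ sᶜ, c i := by
    rw [Finset.mul_sum]
    exact Finset.sum_le_sum fun i hi =>
      mul_le_mul_of_nonneg_right (hb i (Finset.mem_compl.1 hi)) (hc₀ i)
  have hcompl : ∑ i ∈ sᶜ, c i = s.card - ∑ i ∈ s, c i := by
    rw [← hc, ← Finset.sum_add_sum_compl s c, add_sub_cancel_left]
  simp only [mul_sub, mul_one, Finset.sum_sub_distrib, Finset.sum_const, nsmul_eq_mul] at hin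
  rw [hcompl] at hout
  rw [← Finset.sum_add_sum_compl s fun i => μ i * c i]
  linarith

theorem froSq_transpose_mul_of_mul_transpose_eq_diagonal [DecidableEq ι] {Y : Matrix ι l ℝ}
    {μ : ι → ℝ} (hY : Y * Yᵀ = diagonal μ) (X : Matrix ι κ ℝ) :
    froSq (Xᵀ * Y) = ∑ i, μ i * ∑ k, X i k ^ 2 := by
  have htrace : froSq (Xᵀ * Y) = (diagonal μ * (X * Xᵀ)).trace := by
    rw [← froSq_transpose, froSq_eq_trace, transpose_transpose, transpose_mul, transpose_transpose,
      Matrix.mul_assoc, ← Matrix.mul_assoc Y, hY, trace_mul_comm, Matrix.mul_assoc]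
  rw [htrace, trace]
  refine Finset.sum_congr rfl fun i _ => ?_
  rw [diag_apply, diagonal_mul]
  simp only [mul_apply, transpose_apply, sq]

theorem gap_mul_le_froSq_sub_of_mul_transpose_eq_diagonal [DecidableEq ι] [DecidableEq κ]
    {Y : Matrix ι l ℝ} {μ : ι → ℝ} (hY : Y * Yᵀ = diagonal μ) (e : κ ↪ ι) {a b : ℝ}
    (ha : ∀ k, a ≤ μ (e k)) (hb : ∀ i ∉ Set.range e, μ i ≤ b)
    {X : Matrix ι κ ℝ} (hX : Xᵀ * X = 1) :
    (a - b) * (Fintype.card κ - froSq (X.submatrix e id)) ≤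
      froSq (Y.submatrix e id) - froSq (Xᵀ * Y) := by
  have hYe : froSq (Y.submatrix e id) = ∑ k, μ (e k) :=
    Finset.sum_congr rfl fun k _ => by
      simpa [mul_apply, sq] using congr_fun₂ hY (e k) (e k)
  have h := gap_mul_le_sum_sub_sum_mul (s := Finset.univ.map e) (μ := μ)
    (c := fun i => ∑ k, X i k ^ 2) (a := a) (b := b) (by simpa using ha) (by simpa using hb)
    (fun i => Finset.sum_nonneg fun k _ => sq_nonneg _) (sum_row_sq_le_one hX)
    (by simpa [froSq] using froSq_of_transpose_mul_self_eq_one hX)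
  rw [hYe, froSq_transpose_mul_of_mul_transpose_eq_diagonal hY]
  simpa [froSq] using h

end SpectralGap

section SingularValues

variable {m : ℕ} {κ : Type*} [Fintype κ] (Y : Matrix (Fin m) κ ℝ)

theorem eigList_sortedGE : (eigList Y).SortedGE :=
  List.sortedGE_reverse.2 (Multiset.pairwise_sort _ _).sortedLE

-- Truncated subtraction makes `sval Y 0 = sval Y 1`.
theorem sval_antitone : Antitone (sval Y) := by
  intro i j hij
  by_cases hj : j - 1 < (eigList Y).length
  · refine Real.sqrt_le_sqrt ?_
    rw [List.getD_eq_getElem _ _ hj, List.getD_eq_getElem _ _ (by omega)]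
    exact (eigList_sortedGE Y).antitone_get (Fin.mk_le_mk.2 (by omega))
  · rw [sval, List.getD_eq_default _ _ (not_lt.1 hj), Real.sqrt_zero]
    exact Real.sqrt_nonneg _

theorem sval_sq_antitone : Antitone fun i => sval Y i ^ 2 := fun _ _ hij =>
  pow_le_pow_left₀ (Real.sqrt_nonneg _) (sval_antitone Y hij) 2

theorem exists_perm_eigList_eq_ofFn : ∃ e : Equiv.Perm (Fin m),
    eigList Y = List.ofFn ((isHermitian_mul_conjTranspose_self Y).eigenvalues ∘ e) := by
  set μ := (isHermitian_mul_conjTranspose_self Y).eigenvalues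
  have hanti : Antitone (μ ∘ Tuple.sort (-μ)) := by
    intro i j hij
    simpa using Tuple.monotone_sort (-μ) hij
  refine ⟨Tuple.sort (-μ), List.Perm.eq_of_sortedGE (eigList_sortedGE Y) hanti.sortedGE_ofFn ?_⟩
  refine (List.reverse_perm _).trans (.trans ?_ (Equiv.Perm.ofFn_comp_perm _ μ).symm)
  rw [← Multiset.coe_eq_coe, Multiset.sort_eq, Fin.univ_val_map]

theorem exists_orthogonal_diagonalization_sval_sq : ∃ P : Matrix (Fin m) (Fin m) ℝ,
    Pᵀ * P = 1 ∧ Pᵀ * (Y * Yᵀ) * P = diagonal fun i : Fin m => sval Y (i + 1) ^ 2 := by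
  obtain ⟨e, he⟩ := exists_perm_eigList_eq_ofFn Y
  obtain ⟨P, hP, hdiag⟩ := exists_orthogonal_diagonalization (isHermitian_mul_conjTranspose_self Y)
  have hsval (i : Fin m) : sval Y (i + 1) ^ 2 =
      (isHermitian_mul_conjTranspose_self Y).eigenvalues (e i) := by
    have hnonneg := (posSemidef_self_mul_conjTranspose Y).eigenvalues_nonneg (e i)
    simpa [sval, he] using Real.sq_sqrt hnonneg
  refine ⟨P.submatrix id e, ?_, ?_⟩
  · rw [transpose_submatrix, ← submatrix_mul _ _ _ _ _ Function.bijective_id, hP,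
      submatrix_one_equiv]
  · -- over `ℝ`, `Yᴴ` and `Yᵀ` agree definitionally
    calc (P.submatrix id e)ᵀ * (Y * Yᵀ) * P.submatrix id e
        = (Pᵀ * (Y * Yᴴ) * P).submatrix e e := rfl
      _ = diagonal fun i : Fin m => sval Y (i + 1) ^ 2 := by
        simp only [hdiag, hsval, submatrix_diagonal_equiv, Function.comp_def]

theorem exists_mem_Stiefel_gap_mul_le {r : ℕ} (hrm : r ≤ m) :
    ∃ U ∈ Stiefel m r, ∀ X ∈ Stiefel m r,
      (sval Y r ^ 2 - sval Y (r + 1) ^ 2) * (r - froSq (Uᵀ * X)) ≤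
        froSq (Uᵀ * Y) - froSq (Xᵀ * Y) := by
  obtain ⟨P, hP, hdiag⟩ := exists_orthogonal_diagonalization_sval_sq Y
  have hP' : Pᵀᵀ * Pᵀ = 1 := mul_eq_one_comm.1 hP
  have hPY : Pᵀ * Y * (Pᵀ * Y)ᵀ = diagonal fun i : Fin m => sval Y (i + 1) ^ 2 := by
    rw [← hdiag]
    simp only [transpose_mul, transpose_transpose, Matrix.mul_assoc]
  refine ⟨P.submatrix id (Fin.castLE hrm), ?_, fun X hX => ?_⟩
  · calc (P.submatrix id (Fin.castLE hrm))ᵀ * P.submatrix id (Fin.castLE hrm)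
        = (Pᵀ * P).submatrix (Fin.castLE hrm) (Fin.castLE hrm) := rfl
      _ = 1 := by rw [hP, submatrix_one _ (Fin.castLE_injective hrm)]
  · have hXY : Xᵀ * Y = (Pᵀ * X)ᵀ * (Pᵀ * Y) := by
      rw [transpose_mul, Matrix.mul_assoc, ← Matrix.mul_assoc _ Pᵀ, hP', Matrix.one_mul]
    have h := gap_mul_le_froSq_sub_of_mul_transpose_eq_diagonal hPY (Fin.castLEEmb hrm)
      (a := sval Y r ^ 2) (b := sval Y (r + 1) ^ 2) (fun k => sval_sq_antitone Y k.2)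
      (fun i hi => sval_sq_antitone Y (by simpa using hi)) (transpose_mul_self_mul_eq_one hP' hX)
    rw [Fintype.card_fin, ← hXY] at h
    exact h

end SingularValues

section Maximizers

variable {m p r : ℕ} {Y : Matrix (Fin m) (Fin p) ℝ}

theorem mul_mem_HSet {U : Matrix (Fin m) (Fin r) ℝ} (hU : U ∈ HSet Y r)
    {Q : Matrix (Fin r) (Fin r) ℝ} (hQ : Qᵀ * Q = 1) : U * Q ∈ HSet Y r := by
  have hQ' : Qᵀᵀ * Qᵀ = 1 := mul_eq_one_comm.1 hQ
  refine ⟨transpose_mul_self_mul_eq_one hU.1 hQ, fun W hW => ?_⟩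
  rw [transpose_mul, Matrix.mul_assoc, froSq_mul_of_transpose_mul_self_eq_one hQ']
  exact hU.2 W hW

theorem exists_mem_HSet_gap_mul_le (hrm : r ≤ m) (Y : Matrix (Fin m) (Fin p) ℝ) :
    ∃ U ∈ HSet Y r, ∀ X ∈ Stiefel m r,
      (sval Y r ^ 2 - sval Y (r + 1) ^ 2) * (r - froSq (Uᵀ * X)) ≤
        froSq (Uᵀ * Y) - froSq (Xᵀ * Y) := by
  obtain ⟨U, hU, hgap⟩ := exists_mem_Stiefel_gap_mul_le Y hrm
  refine ⟨U, ⟨hU, fun W hW => sub_nonneg.1 (le_trans ?_ (hgap W hW))⟩, hgap⟩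
  have hcard : froSq (Uᵀ * W) ≤ r := by
    simpa [froSq_of_transpose_mul_self_eq_one hW] using froSq_transpose_mul_le hU W
  exact mul_nonneg (sub_nonneg.2 (sval_sq_antitone Y r.le_succ)) (sub_nonneg.2 hcard)

end Maximizers

/-- Any minimizer `Z` of `‖Z − X‖_F²` over `H_{Y,r}` satisfies
`((σ_r(Y)² − σ_{r+1}(Y)²)/2) ‖Z − X‖_F² ≤ ‖Zᵀ Y‖_F² − ‖Xᵀ Y‖_F²`. -/
theorem stmt1 {m p r : ℕ} (hr1 : 1 ≤ r) (hrm : r ≤ m)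
    (X : Matrix (Fin m) (Fin r) ℝ) (hX : X ∈ Stiefel m r)
    (Y : Matrix (Fin m) (Fin p) ℝ)
    (Z : Matrix (Fin m) (Fin r) ℝ) (hZ : IsProj Y X Z) :
    ((sval Y r) ^ 2 - (sval Y (r + 1)) ^ 2) / 2 * froSq (Z - X) ≤
      froSq (Zᵀ * Y) - froSq (Xᵀ * Y) := by
  obtain ⟨U, hU, hgap⟩ := exists_mem_HSet_gap_mul_le hrm Y
  obtain ⟨Q, hQ, hdist⟩ := exists_orthogonal_froSq_sub_le hU.1 hX
  have hclosest : froSq (Z - X) / 2 ≤ r - froSq (Uᵀ * X) := by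
    rw [Fintype.card_fin] at hdist
    linarith [hZ.2 (U * Q) (mul_mem_HSet hU hQ)]
  have hgap_nonneg : 0 ≤ sval Y r ^ 2 - sval Y (r + 1) ^ 2 :=
    sub_nonneg.2 (sval_sq_antitone Y r.le_succ)
  calc (sval Y r ^ 2 - sval Y (r + 1) ^ 2) / 2 * froSq (Z - X)
      = (sval Y r ^ 2 - sval Y (r + 1) ^ 2) * (froSq (Z - X) / 2) := by ring
    _ ≤ (sval Y r ^ 2 - sval Y (r + 1) ^ 2) * (r - froSq (Uᵀ * X)) :=
        mul_le_mul_of_nonneg_left hclosest hgap_nonneg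
    _ ≤ froSq (Uᵀ * Y) - froSq (Xᵀ * Y) := hgap X hX
    _ ≤ froSq (Zᵀ * Y) - froSq (Xᵀ * Y) := sub_le_sub_right (hZ.1.2 U hU.1) _
end

section
/- Let G ∈ ℝ^{m×p} and 1 ≤ r ≤ m. If A ∈ O_{m×r} maximizes ‖BᵀG‖_F² over B ∈ O_{m×r}, then GGᵀA = AAᵀGGᵀA. -/
open Matrix BigOperators Filter

/-!
Write `S = G Gᴴ`, so that `‖Bᴴ G‖_F² = tr (Bᴴ S B)`. If `A` is a local extremum of this function
among the matrices with orthonormal columns, then in particular the function `tr (U (A Aᴴ) Uᴴ S)`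
of a unitary matrix `U` has a local extremum at `U = 1`. Differentiating it along `U = exp (t K)`,
where `K` is the skew-Hermitian commutator `[S, A Aᴴ]`, gives `‖K‖_F² = 0`, so `S` commutes with
`A Aᴴ`, and `S A = S (A Aᴴ) A = A Aᴴ S A`.
-/

section CriticalPoint

open NormedSpace

theorem hasDerivAt_exp_smul_mul_mul_exp_smul_neg {𝕂 𝔸 : Type*} [RCLike 𝕂] [NormedRing 𝔸]
    [NormedAlgebra 𝕂 𝔸] [CompleteSpace 𝔸] (x a : 𝔸) :
    HasDerivAt (fun t : 𝕂 => exp (t • x) * a * exp (t • -x)) (x * a - a * x) 0 := by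
  have hexp (y : 𝔸) : HasDerivAt (fun t : 𝕂 => exp (t • y)) y 0 := by
    simpa using hasDerivAt_exp_smul_const y (0 : 𝕂)
  simpa [Pi.mul_def, sub_eq_add_neg] using ((hexp x).mul_const a).mul (hexp (-x))

theorem trace_commutator_mul {ι R : Type*} [Fintype ι] [NonUnitalCommRing R]
    (K P S : Matrix ι ι R) :
    ((K * P - P * K) * S).trace = (K * (P * S - S * P)).trace := by
  rw [Matrix.sub_mul, Matrix.mul_sub, trace_sub, trace_sub, Matrix.mul_assoc P K S,
    trace_mul_comm P (K * S), Matrix.mul_assoc, Matrix.mul_assoc]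

theorem conjTranspose_commutator {ι R : Type*} [Fintype ι] [NonUnitalRing R] [StarRing R]
    {S P : Matrix ι ι R} (hS : S.IsHermitian) (hP : P.IsHermitian) :
    (S * P - P * S)ᴴ = P * S - S * P := by
  rw [conjTranspose_sub, conjTranspose_mul, conjTranspose_mul, hS.eq, hP.eq]

variable {𝕜 ι κ : Type*} [RCLike 𝕜] [Fintype ι] [Fintype κ]

open scoped ComplexOrder in
theorem re_trace_mul_conjTranspose_self_eq_zero_iff {M : Matrix ι κ 𝕜} :
    RCLike.re (M * Mᴴ).trace = 0 ↔ M = 0 := by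
  have him : RCLike.im (M * Mᴴ).trace = 0 :=
    (RCLike.nonneg_iff.mp (posSemidef_self_mul_conjTranspose M).trace_nonneg).2
  rw [← trace_mul_conjTranspose_self_eq_zero_iff, RCLike.ext_iff (z := (M * Mᴴ).trace), map_zero,
    map_zero, and_iff_left him]

section DecidableEq

variable [DecidableEq ι]

theorem hasDerivAt_re_trace_exp_smul_conj_mul (K P S : Matrix ι ι 𝕜) :
    HasDerivAt (fun t : ℝ => RCLike.re (exp (t • K) * P * exp (t • -K) * S).trace)
      (RCLike.re ((K * P - P * K) * S).trace) 0 := by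
  open scoped Matrix.Norms.Operator in
  let L : Matrix ι ι 𝕜 →ₗ[ℝ] ℝ :=
    RCLike.reLm ∘ₗ traceLinearMap ι ℝ 𝕜 ∘ₗ LinearMap.mulRight ℝ S
  exact L.toContinuousLinearMap.hasFDerivAt.comp_hasDerivAt 0
    (hasDerivAt_exp_smul_mul_mul_exp_smul_neg K P)

theorem continuous_exp_smul (K : Matrix ι ι 𝕜) : Continuous fun t : ℝ => exp (t • K) := by
  open scoped Matrix.Norms.Operator in
  exact (differentiable_exp_smul_const ℝ K).continuous

theorem exp_mem_unitaryGroup {K : Matrix ι ι 𝕜} (hK : Kᴴ = -K) : exp K ∈ unitaryGroup ι 𝕜 := by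
  rw [mem_unitaryGroup_iff, star_eq_conjTranspose, ← exp_conjTranspose, hK, Matrix.exp_neg,
    mul_nonsing_inv _ ((isUnit_iff_isUnit_det _).mp (isUnit_exp K))]

theorem commute_of_isLocalExtrOn_re_trace_unitary_conj {S P : Matrix ι ι 𝕜}
    (hS : S.IsHermitian) (hP : P.IsHermitian)
    (h : IsLocalExtrOn (fun U => RCLike.re (U * P * Uᴴ * S).trace)
      (unitaryGroup ι 𝕜 : Set (Matrix ι ι 𝕜)) 1) :
    Commute S P := by
  set K := S * P - P * S with hK
  have hK_star : Kᴴ = P * S - S * P := conjTranspose_commutator hS hP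
  have hK_smul_star (t : ℝ) : (t • K)ᴴ = t • -K := by
    rw [conjTranspose_smul, star_trivial, hK_star, hK, neg_sub]
  have hexp_mem (t : ℝ) : exp (t • K) ∈ unitaryGroup ι 𝕜 :=
    exp_mem_unitaryGroup (by rw [hK_smul_star, smul_neg])
  have hextr : IsLocalExtr
      (fun t : ℝ => RCLike.re (exp (t • K) * P * exp (t • -K) * S).trace) 0 := by
    rw [← exp_zero, ← zero_smul ℝ K] at h
    have hcurve := h.comp_continuousOn (s := Set.univ) (fun t : ℝ => exp (t • K))
      (fun t _ => hexp_mem t) (continuous_exp_smul K).continuousOn (Set.mem_univ 0)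
    simpa only [Function.comp_def, ← exp_conjTranspose, hK_smul_star] using
      hcurve.isLocalExtr univ_mem
  have hderiv : RCLike.re ((K * P - P * K) * S).trace = 0 :=
    hextr.hasDerivAt_eq_zero (hasDerivAt_re_trace_exp_smul_conj_mul K P S)
  rw [trace_commutator_mul, ← hK_star, re_trace_mul_conjTranspose_self_eq_zero_iff] at hderiv
  exact sub_eq_zero.mp hderiv

end DecidableEq

variable [DecidableEq κ] {S : Matrix ι ι 𝕜} {A : Matrix ι κ 𝕜}

theorem isLocalExtrOn_re_trace_unitary_conj [DecidableEq ι] (hA : Aᴴ * A = 1)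
    (h : IsLocalExtrOn (fun B => RCLike.re (Bᴴ * S * B).trace) {B | Bᴴ * B = 1} A) :
    IsLocalExtrOn (fun U => RCLike.re (U * (A * Aᴴ) * Uᴴ * S).trace)
      (unitaryGroup ι 𝕜 : Set (Matrix ι ι 𝕜)) 1 := by
  have hmem (U : Matrix ι ι 𝕜) (hU : U ∈ unitaryGroup ι 𝕜) : (U * A)ᴴ * (U * A) = 1 := by
    rw [conjTranspose_mul, Matrix.mul_assoc, ← Matrix.mul_assoc Uᴴ, ← star_eq_conjTranspose U,
      mem_unitaryGroup_iff'.mp hU, Matrix.one_mul, hA]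
  have htrace (U : Matrix ι ι 𝕜) :
      ((U * A)ᴴ * S * (U * A)).trace = (U * (A * Aᴴ) * Uᴴ * S).trace := by
    rw [Matrix.mul_assoc, trace_mul_comm, Matrix.mul_assoc, trace_mul_comm, conjTranspose_mul]
    simp only [Matrix.mul_assoc]
  rw [← Matrix.one_mul A] at h
  simpa only [Function.comp_def, htrace] using
    h.comp_continuousOn (· * A) hmem (by fun_prop) (one_mem (unitaryGroup ι 𝕜))

theorem stmt7_general (hS : S.IsHermitian) (hA : Aᴴ * A = 1)
    (hextr : IsLocalExtrOn (fun B => RCLike.re (Bᴴ * S * B).trace) {B | Bᴴ * B = 1} A) :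
    S * A = A * Aᴴ * (S * A) := by
  classical
  have hcomm : Commute S (A * Aᴴ) :=
    commute_of_isLocalExtrOn_re_trace_unitary_conj hS (isHermitian_mul_conjTranspose_self A)
      (isLocalExtrOn_re_trace_unitary_conj hA hextr)
  calc S * A = S * (A * Aᴴ) * A := by rw [Matrix.mul_assoc, Matrix.mul_assoc, hA, Matrix.mul_one]
    _ = A * Aᴴ * (S * A) := by rw [hcomm.eq, Matrix.mul_assoc]

end CriticalPoint

theorem froSq_eq_trace_mul_transpose {ι κ : Type*} [Fintype ι] [Fintype κ] (M : Matrix ι κ ℝ) :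
    froSq M = (M * Mᵀ).trace := by
  simp only [froSq, trace, diag_apply, mul_apply, transpose_apply, sq]

theorem froSq_transpose_mul {ι κ ρ : Type*} [Fintype ι] [Fintype κ] [Fintype ρ]
    (B : Matrix ι ρ ℝ) (G : Matrix ι κ ℝ) :
    froSq (Bᵀ * G) = (Bᵀ * (G * Gᵀ) * B).trace := by
  rw [froSq_eq_trace_mul_transpose, transpose_mul, transpose_transpose]
  simp only [Matrix.mul_assoc]

/-- If `A ∈ O_{m×r}` maximizes `‖Bᵀ G‖_F²` over `B ∈ O_{m×r}`,
then `G Gᵀ A = A Aᵀ G Gᵀ A`. -/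
theorem stmt7 {m p r : ℕ} (hr1 : 1 ≤ r) (hrm : r ≤ m)
    (G : Matrix (Fin m) (Fin p) ℝ)
    (A : Matrix (Fin m) (Fin r) ℝ) (hA : A ∈ Stiefel m r)
    (hmax : ∀ B ∈ Stiefel m r, froSq (Bᵀ * G) ≤ froSq (Aᵀ * G)) :
    G * Gᵀ * A = A * Aᵀ * (G * Gᵀ * A) := by
  refine stmt7_general (isHermitian_mul_conjTranspose_self G) hA (IsMaxOn.localize ?_).isExtr
  exact fun B hB => by simpa [froSq_transpose_mul] using hmax B hB
end
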